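/- Let E be a real inner product space, x ∈ E, and L : E → ℝ a function differentiable at x with gradient g (i.e., L(x + δ) = L(x) + ⟪g, δ⟫ + o(‖δ‖) as δ → 0). Define V(ε) = sup_{‖δ‖ ≤ ε} (L(x + δ) − L(x)) for ε > 0, and assume L is bounded on some ball around x so that V(ε) is finite for small ε. Then V(ε)/ε tends to ‖g‖ as ε tends to 0 from the right. -/

import Mathlib

open Filter Asymptotics
open scoped RealInnerProductSpace Topology

/-!
On the ball `‖δ‖ ≤ ε` the increment `L (x + δ) - L x` is uniformly within `o(ε)` of the linear
functional `f δ`, where `f` is the derivative of `L` at `x`. Suprema are stable under uniform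
perturbation, and the supremum of `f` over that ball is `ε * ‖f‖`.
-/

/-- The adversarial vulnerability of the loss `L` at the input `x`: the supremum of the loss
increase over perturbations of norm at most `ε`. As a real `sSup`, it takes the junk value `0`
when the increase is unbounded above or `ε < 0`. -/
noncomputable def adversarialVulnerability {E : Type*} [SeminormedAddCommGroup E]
    (L : E → ℝ) (x : E) (ε : ℝ) : ℝ :=
  sSup ((fun δ : E => L (x + δ) - L x) '' Metric.closedBall 0 ε)

theorem abs_csSup_image_sub_le_of_isLUB {ι : Type*} {s : Set ι} {u v : ι → ℝ} {M c : ℝ}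
    (hv : IsLUB (v '' s) M) (huv : ∀ i ∈ s, |u i - v i| ≤ c) :
    |sSup (u '' s) - M| ≤ c := by
  have hs : s.Nonempty := hv.nonempty.of_image
  have image_le : ∀ y ∈ u '' s, y ≤ M + c := by
    rintro _ ⟨i, hi, rfl⟩
    linarith [(abs_le.1 (huv i hi)).2, hv.1 (Set.mem_image_of_mem v hi)]
  have csSup_le_add : sSup (u '' s) ≤ M + c := csSup_le (hs.image u) image_le
  have le_csSup_add : M ≤ sSup (u '' s) + c := by
    refine hv.2 ?_
    rintro _ ⟨i, hi, rfl⟩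
    linarith [(abs_le.1 (huv i hi)).1, le_csSup ⟨_, image_le⟩ (Set.mem_image_of_mem u hi)]
  exact abs_le.2 ⟨by linarith, by linarith⟩

theorem eventually_forall_closedBall_norm_le_of_isLittleO {E F : Type*}
    [SeminormedAddCommGroup E] [SeminormedAddCommGroup F] {r : E → F}
    (hr : r =o[𝓝 0] fun δ => δ) {c : ℝ} (hc : 0 < c) :
    ∀ᶠ ε in 𝓝 (0 : ℝ), ∀ δ ∈ Metric.closedBall (0 : E) ε, ‖r δ‖ ≤ c * ε := by
  filter_upwards [eventually_closedBall_subset (hr.def hc)] with ε hε δ hδ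
  exact (hε hδ).trans (mul_le_mul_of_nonneg_left (mem_closedBall_zero_iff.1 hδ) hc.le)

section StrongDual

variable {E : Type*} [NormedAddCommGroup E] [NormedSpace ℝ E]

theorem isLUB_image_closedBall_zero (f : StrongDual ℝ E) {ε : ℝ} (hε : 0 < ε) :
    IsLUB (f '' Metric.closedBall 0 ε) (ε * ‖f‖) := by
  refine ⟨?_, fun M hM => ?_⟩
  · rintro _ ⟨δ, hδ, rfl⟩
    calc f δ ≤ ‖f δ‖ := Real.le_norm_self _
      _ ≤ ‖f‖ * ‖δ‖ := f.le_opNorm δ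
      _ ≤ ‖f‖ * ε := by gcongr; exact mem_closedBall_zero_iff.1 hδ
      _ = ε * ‖f‖ := mul_comm _ _
  · have apply_le : ∀ δ ∈ Metric.closedBall (0 : E) ε, f δ ≤ M := fun δ hδ => hM ⟨δ, hδ, rfl⟩
    have norm_apply_le : ∀ δ ∈ Metric.closedBall (0 : E) ε, ‖f δ‖ ≤ M := fun δ hδ =>
      abs_le'.2 ⟨apply_le δ hδ, by simpa using apply_le (-δ) (by simpa using hδ)⟩
    exact (le_div_iff₀' hε).1
      (ContinuousLinearMap.opNorm_bound_of_ball_bound hε M f norm_apply_le)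

variable {L : E → ℝ} {f : StrongDual ℝ E} {x : E}

theorem adversarialVulnerability_sub_isLittleO (hL : HasFDerivAt L f x) :
    (fun ε => adversarialVulnerability L x ε - ε * ‖f‖) =o[𝓝[>] 0] fun ε => ε := by
  refine isLittleO_iff.2 fun c hc => ?_
  have remainder_le := eventually_forall_closedBall_norm_le_of_isLittleO
    (hasFDerivAt_iff_isLittleO_nhds_zero.1 hL) hc
  filter_upwards [nhdsWithin_le_nhds remainder_le, self_mem_nhdsWithin]
    with ε hε (ε_pos : 0 < ε)
  rw [Real.norm_of_nonneg ε_pos.le]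
  exact abs_csSup_image_sub_le_of_isLUB (isLUB_image_closedBall_zero f ε_pos) hε

theorem adversarial_vulnerability_first_order_general (hL : HasFDerivAt L f x) :
    Tendsto (fun ε => adversarialVulnerability L x ε / ε) (𝓝[>] 0) (𝓝 ‖f‖) := by
  have remainder_tendsto :=
    (adversarialVulnerability_sub_isLittleO hL).tendsto_div_nhds_zero.add_const ‖f‖
  rw [zero_add] at remainder_tendsto
  refine remainder_tendsto.congr' ?_
  filter_upwards [self_mem_nhdsWithin] with ε (ε_pos : 0 < ε)
  rw [sub_div, mul_div_cancel_left₀ _ ε_pos.ne', sub_add_cancel]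

end StrongDual

/-- First-order Taylor expansion of the pointwise adversarial vulnerability
(Simon-Gabriel et al.): if `L` is differentiable at `x` with gradient `g` and is
bounded on some ball around `x`, then the maximal loss increase over an ε-ball,
divided by ε, tends to `‖g‖` as `ε → 0⁺`. -/
theorem adversarial_vulnerability_first_order
    {E : Type*} [NormedAddCommGroup E] [InnerProductSpace ℝ E]
    (x : E) (L : E → ℝ) (g : E)
    (hdiff : (fun δ : E => L (x + δ) - L x - ⟪g, δ⟫) =o[𝓝 (0 : E)] fun δ => ‖δ‖)
    (hbdd : ∃ ρ > (0 : ℝ), ∃ C : ℝ, ∀ δ : E, ‖δ‖ ≤ ρ → |L (x + δ)| ≤ C)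
    (V : ℝ → ℝ)
    (hV : ∀ ε > (0 : ℝ),
      V ε = sSup ((fun δ : E => L (x + δ) - L x) '' {δ : E | ‖δ‖ ≤ ε})) :
    Tendsto (fun ε => V ε / ε) (𝓝[>] (0 : ℝ)) (𝓝 ‖g‖) := by
  have hL : HasFDerivAt L (innerSL ℝ g) x :=
    hasFDerivAt_iff_isLittleO_nhds_zero.2 hdiff.of_norm_right
  rw [← innerSL_apply_norm ℝ g]
  refine (adversarial_vulnerability_first_order_general hL).congr' ?_
  filter_upwards [self_mem_nhdsWithin] with ε hε
  simp only [hV ε hε, adversarialVulnerability, Metric.closedBall, dist_zero_right]
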